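/- Let t ≥ 1, k ≥ t+2 and n ≥ 2k be integers satisfying the inequality Σ_{ℓ=t+2}^{k} ℓ²·(k−t+1)^{ℓ−t−1} · (Σ_{i=t}^{ℓ} C(ℓ,i)) · (Σ_{j=0}^{k−ℓ} C(n,j)) ≤ C(n−t−1, k−t−1) + ((t+2)(t+1)−4)/2 · C(n−t−2, k−t−1) + ((t+3)(t+2)−8)/2 · Σ_{j=0}^{k−t−2} C(n−t−2, j) + Σ_{j=0}^{k−t−3} C(n−t−2, j). Then every t-intersecting family F ⊆ binom([n],k) satisfies |I(F)| ≤ |I(A_t)|, where A_t = {A ∈ binom([n],k) : |A ∩ {1,…,t+2}| ≥ t+1} and C(a,b) denotes the binomial coefficient a choose b. -/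

import Mathlib

open Finset

/-- The collection of distinct intersections `{F ∩ G : F, G ∈ 𝓕, F ≠ G}`. -/
def interFam (F : Finset (Finset ℕ)) : Finset (Finset ℕ) :=
  ((F ×ˢ F).filter fun p => p.1 ≠ p.2).image fun p => p.1 ∩ p.2

/-- A family is `t`-intersecting if any two members meet in at least `t` elements. -/
def tIntersecting (t : ℕ) (F : Finset (Finset ℕ)) : Prop :=
  ∀ A ∈ F, ∀ B ∈ F, t ≤ (A ∩ B).card

/-- The family `𝓐_t = {A ∈ [n]^(k) : |A ∩ {1,…,t+2}| ≥ t+1}`. -/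
def At (n k t : ℕ) : Finset (Finset ℕ) :=
  ((Finset.Icc 1 n).powersetCard k).filter fun A => t + 1 ≤ (A ∩ Finset.Icc 1 (t + 2)).card

/-- A `t`-intersecting family `F ⊆ [n]^(k)` is saturated if no `k`-set outside `F`
can be added keeping the `t`-intersecting property. -/
def saturated (n k t : ℕ) (F : Finset (Finset ℕ)) : Prop :=
  ∀ G ∈ (Finset.Icc 1 n).powersetCard k, G ∉ F → ¬ tIntersecting t (insert G F)

/-- The family of `t`-transversals `T(F)`. -/
def transv (n k t : ℕ) (F : Finset (Finset ℕ)) : Finset (Finset ℕ) :=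
  (Finset.Icc 1 n).powerset.filter fun T => T.card ≤ k ∧ ∀ A ∈ F, t ≤ (T ∩ A).card

/-- The minimal members (under inclusion) of a family. -/
def minFam (S : Finset (Finset ℕ)) : Finset (Finset ℕ) :=
  S.filter fun B => ∀ B' ∈ S, B' ⊆ B → B' = B

/-!
Adding members to `F` only enlarges `I(F)`, so `F` may be taken saturated. Since `n ≥ 2k`, any two
`t`-transversals of a saturated family extend to members with the same intersection, so the
transversals are themselves `t`-intersecting.

If the minimal transversals of size at most `t + 1` share no `t` common elements, three of them lie
in a `(t + 2)`-set `Y` that every member of `F` meets in at least `t + 1` elements. Then `I(F)`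
consists of sets of size less than `k` meeting `Y` in at least `t` elements, and for
`Y = {1, …, t + 2}` these sets make up `I(A_t)`.

Otherwise let `a` be the largest size such that the minimal transversals of size at most `a` share
a `t`-set `C`. An intersection `A ∩ A'` either contains `C`, or one of `A`, `A'` contains a minimal
transversal `B` with `|B| > a`, which the other one meets in at least `t` elements. Branching over
the elements of a member of `F` bounds the number of minimal transversals of each size, and the
assumed inequality says that the intersections of the second kind are few enough. It settles
`t = 1` term by term. For `t ≥ 2` only its first summand is used: it forces the binomial sums to
grow so fast that the bounds for the successive sizes decay by a factor of `5`.
-/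

section BinomialSums

/-- The partial row sum `C(m, 0) + ⋯ + C(m, r - 1)`, which counts the subsets of size less than `r`
of an `m`-set. -/
def chooseSum (m r : ℕ) : ℕ := ∑ j ∈ range r, m.choose j

theorem chooseSum_le_chooseSum {m m' r r' : ℕ} (hm : m ≤ m') (hr : r ≤ r') :
    chooseSum m r ≤ chooseSum m' r' :=
  (sum_le_sum fun _ _ ↦ Nat.choose_le_choose _ hm).trans
    (sum_le_sum_of_subset (range_mono hr))

theorem chooseSum_succ (m r : ℕ) : chooseSum m (r + 1) = chooseSum m r + m.choose r :=
  sum_range_succ _ _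

theorem choose_le_chooseSum_succ (m r : ℕ) : m.choose r ≤ chooseSum m (r + 1) :=
  (Nat.le_add_left _ _).trans (chooseSum_succ m r).ge

theorem chooseSum_succ_succ (m r : ℕ) :
    chooseSum (m + 1) (r + 1) = chooseSum m (r + 1) + chooseSum m r := by
  simp only [chooseSum, sum_range_succ', Nat.choose_succ_succ', sum_add_distrib,
    Nat.choose_zero_right]
  ring

theorem sum_Icc_choose_eq_chooseSum {m t : ℕ} (h : t ≤ m) :
    ∑ i ∈ Icc t m, m.choose i = chooseSum m (m - t + 1) :=
  sum_nbij' (m - ·) (m - ·) (by grind) (by grind) (by grind) (by grind)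
    fun i hi ↦ (Nat.choose_symm (mem_Icc.mp hi).2).symm

theorem three_mul_chooseSum_succ_le (t : ℕ) {s : ℕ} (hs : 2 ≤ s) :
    3 * chooseSum (t + s + 1) (s + 2) ≤ (t + 6) * chooseSum (t + s) (s + 1) := by
  have hchoose : 3 * (t + s).choose (s + 1) ≤ t * chooseSum (t + s) (s + 1) :=
    calc 3 * (t + s).choose (s + 1) ≤ (s + 1) * (t + s).choose (s + 1) := by gcongr; omega
      _ = t * (t + s).choose s := by
        rw [mul_comm, Nat.choose_succ_right_eq, Nat.add_sub_cancel, mul_comm]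
      _ ≤ t * chooseSum (t + s) (s + 1) := by gcongr; exact choose_le_chooseSum_succ _ _
  rw [chooseSum_succ_succ, chooseSum_succ _ (s + 1)]
  linarith

/-- Since `C(m, j + 1) / C(m, j)` decreases in `j`, a lower bound for this ratio at `j = p` also
holds below `p`. -/
theorem mul_choose_le_mul_choose_succ {m p x h : ℕ} (hp : p ≤ m)
    (hx : x * m.choose p ≤ h * m.choose (p + 1)) {j : ℕ} (hj : j ≤ p) :
    x * m.choose j ≤ h * m.choose (j + 1) := by
  have hratio : x * (p + 1) ≤ h * (m - p) := by
    refine Nat.le_of_mul_le_mul_left ?_ (Nat.choose_pos hp)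
    calc m.choose p * (x * (p + 1)) = x * m.choose p * (p + 1) := by ring
      _ ≤ h * m.choose (p + 1) * (p + 1) := by gcongr
      _ = h * (m.choose (p + 1) * (p + 1)) := by ring
      _ = m.choose p * (h * (m - p)) := by rw [Nat.choose_succ_right_eq]; ring
  refine Nat.le_of_mul_le_mul_right ?_ j.succ_pos
  calc x * m.choose j * (j + 1) = m.choose j * (x * (j + 1)) := by ring
    _ ≤ m.choose j * (x * (p + 1)) := by gcongr
    _ ≤ m.choose j * (h * (m - p)) := by gcongr
    _ ≤ m.choose j * (h * (m - j)) := by gcongr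
    _ = h * (m.choose j * (m - j)) := by ring
    _ = h * m.choose (j + 1) * (j + 1) := by rw [← Nat.choose_succ_right_eq]; ring

theorem mul_chooseSum_le_mul_chooseSum_succ {m p x h : ℕ} (hp : p ≤ m)
    (hx : x * m.choose p ≤ h * m.choose (p + 1)) {j : ℕ} (hj : j ≤ p + 1) :
    x * chooseSum m j ≤ h * chooseSum m (j + 1) := by
  rw [chooseSum, chooseSum, sum_range_succ', mul_add, mul_sum, mul_sum]
  refine le_add_right (sum_le_sum fun i hi ↦ ?_)
  exact mul_choose_le_mul_choose_succ hp hx (by rw [mem_range] at hi; omega)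

theorem two_mul_choose_add_two_two (t : ℕ) : 2 * (t + 2).choose 2 = (t + 2) * (t + 1) := by
  rw [mul_comm, Nat.choose_succ_right_eq, Nat.choose_one_right, Nat.add_one_sub_one]

theorem two_mul_chooseSum_add_two_three (t : ℕ) :
    2 * chooseSum (t + 2) 3 = t ^ 2 + 5 * t + 8 := by
  simp only [chooseSum, sum_range_succ, sum_range_zero, Nat.choose_zero_right,
    Nat.choose_one_right, mul_add, two_mul_choose_add_two_two]
  ring

end BinomialSums

section Counting

variable {α : Type*}

theorem card_filter_powerset_card_lt (V : Finset α) (r : ℕ) :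
    #{Z ∈ V.powerset | #Z < r} = chooseSum #V r := by
  rw [chooseSum, card_eq_sum_card_fiberwise (f := card) (t := range r)
    fun Z hZ ↦ by simpa using (mem_filter.mp hZ).2]
  refine sum_congr rfl fun j hj ↦ ?_
  rw [← card_powersetCard, powersetCard_eq_filter, filter_filter]
  congr 1
  exact filter_congr fun Z _ ↦ and_iff_right_of_imp fun h ↦ h ▸ mem_range.mp hj

variable [DecidableEq α]

theorem card_filter_powerset_card_inter_eq (U Y : Finset α) (i r : ℕ) :
    #{X ∈ U.powerset | #(X ∩ Y) = i ∧ #(X \ Y) < r}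
      = (#(U ∩ Y)).choose i * chooseSum #(U \ Y) r := by
  rw [← card_filter_powerset_card_lt, ← card_powersetCard, ← card_product]
  refine card_nbij' (fun X ↦ (X ∩ Y, X \ Y)) (fun p ↦ p.1 ∪ p.2) ?_ ?_ ?_ ?_
  · intro X hX
    simp only [mem_coe, mem_filter, mem_powerset, mem_product, mem_powersetCard] at hX ⊢
    exact ⟨⟨inter_subset_inter_right hX.1, hX.2.1⟩, sdiff_subset_sdiff hX.1 le_rfl, hX.2.2⟩
  · rintro ⟨A, B⟩ h
    simp only [mem_coe, mem_filter, mem_powerset, mem_product, mem_powersetCard] at h ⊢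
    have hinter : (A ∪ B) ∩ Y = A := by grind
    have hsdiff : (A ∪ B) \ Y = B := by grind
    rw [hinter, hsdiff]
    exact ⟨by grind, h.1.2, h.2.2⟩
  · intro X _
    exact (union_comm _ _).trans (sdiff_union_inter X Y)
  · rintro ⟨A, B⟩ h
    simp only [mem_coe, mem_filter, mem_powerset, mem_product, mem_powersetCard] at h ⊢
    ext <;> grind

theorem card_filter_powerset_card_inter_mem (U Y : Finset α) (I : Finset ℕ) (r : ℕ → ℕ) :
    #{X ∈ U.powerset | #(X ∩ Y) ∈ I ∧ #(X \ Y) < r #(X ∩ Y)}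
      = ∑ i ∈ I, (#(U ∩ Y)).choose i * chooseSum #(U \ Y) (r i) := by
  rw [card_eq_sum_card_fiberwise (f := fun X ↦ #(X ∩ Y)) (t := I)
    fun X hX ↦ (mem_filter.mp hX).2.1]
  refine sum_congr rfl fun i hi ↦ ?_
  rw [← card_filter_powerset_card_inter_eq, filter_filter]
  congr 1
  exact filter_congr fun X _ ↦ by grind

theorem card_filter_powerset_le_card_inter_le (U : Finset α) {B : Finset α} {t : ℕ} (r : ℕ)
    (ht : t ≤ #B) :
    #{X ∈ U.powerset | t ≤ #(X ∩ B) ∧ #(X \ B) < r}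
      ≤ chooseSum #B (#B - t + 1) * chooseSum #U r := by
  have hset : {X ∈ U.powerset | t ≤ #(X ∩ B) ∧ #(X \ B) < r}
      = {X ∈ U.powerset | #(X ∩ B) ∈ Icc t #B ∧ #(X \ B) < r} :=
    filter_congr fun X _ ↦ by simp only [mem_Icc, card_le_card inter_subset_right, and_true]
  rw [hset, card_filter_powerset_card_inter_mem (r := fun _ ↦ r), ← sum_mul,
    ← sum_Icc_choose_eq_chooseSum ht]
  gcongr
  · exact inter_subset_right
  · exact chooseSum_le_chooseSum (card_le_card sdiff_subset) le_rfl

theorem card_filter_powerset_subset_card_lt_le (U C : Finset α) (k : ℕ) :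
    #{X ∈ U.powerset | C ⊆ X ∧ #X < k} ≤ chooseSum (#U - #C) (k - #C) := by
  by_cases hC : C ⊆ U
  · rw [← card_sdiff_of_subset hC, ← card_filter_powerset_card_lt]
    refine card_le_card_of_injOn (· \ C) (fun X hX ↦ ?_) fun X hX Z hZ h ↦ ?_
    · simp only [mem_coe, mem_filter, mem_powerset] at hX ⊢
      have hcard := card_sdiff_add_card_eq_card hX.2.1
      exact ⟨sdiff_subset_sdiff hX.1 le_rfl, by omega⟩
    · simp only [mem_coe, mem_filter] at hX hZ h
      rw [← sdiff_union_of_subset hX.2.1, h, sdiff_union_of_subset hZ.2.1]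
  · rw [filter_eq_empty_iff.mpr fun X hX h ↦ hC (h.1.trans (mem_powerset.mp hX)), card_empty]
    exact Nat.zero_le _

theorem card_inter_lt_of_ne {A B : Finset α} {k : ℕ} (hA : #A = k) (hB : #B = k) (h : A ≠ B) :
    #(A ∩ B) < k := by
  refine hA ▸ card_lt_card (inter_subset_left.ssubset_of_ne fun hAB ↦ h ?_)
  exact eq_of_subset_of_card_le (inter_eq_left.mp hAB) (hB.trans hA.symm).le

theorem exists_card_eq_inter_eq {U P Q : Finset α} {k : ℕ} (hP : P ⊆ U) (hQ : Q ⊆ U)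
    (hPk : #P ≤ k) (hQk : #Q ≤ k) (hU : 2 * k ≤ #U) :
    ∃ A B, P ⊆ A ∧ Q ⊆ B ∧ A ⊆ U ∧ B ⊆ U ∧ #A = k ∧ #B = k ∧ A ∩ B = P ∩ Q := by
  obtain ⟨A, hPA, hAU, hA⟩ := exists_subsuperset_card_eq
    (show P ⊆ U \ (Q \ P) by grind) hPk (by
      have h₁ := card_sdiff_add_card_inter U (Q \ P)
      have h₂ : #(U ∩ (Q \ P)) ≤ #Q := card_le_card (by grind)
      omega)
  obtain ⟨B, hQB, hBU, hB⟩ := exists_subsuperset_card_eq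
    (show Q ⊆ (U \ A) ∪ Q by grind) hQk (by
      have h₁ := card_sdiff_add_card_inter U A
      have h₂ : #(U ∩ A) ≤ #A := card_le_card inter_subset_right
      have h₃ : #(U \ A) ≤ #((U \ A) ∪ Q) := card_le_card subset_union_left
      omega)
  exact ⟨A, B, hPA, hQB, hAU.trans sdiff_subset, by grind, hA, hB, by grind⟩

end Counting

section Branching

variable {α : Type*} [DecidableEq α] {W : Finset (Finset α)} {A D P Q S : Finset α} {m t M : ℕ}

theorem card_le_choose_mul_of_le_card_inter (hD : ∀ B ∈ W, m ≤ #(B ∩ D))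
    (hM : ∀ S, #S = m → #{B ∈ W | S ⊆ B} ≤ M) : #W ≤ (#D).choose m * M := by
  have hcover : W ⊆ (powersetCard m D).biUnion fun S ↦ {B ∈ W | S ⊆ B} := fun B hB ↦ by
    obtain ⟨S, hSB, hS⟩ := exists_subset_card_eq (hD B hB)
    exact mem_biUnion.mpr ⟨S, mem_powersetCard.mpr ⟨hSB.trans inter_subset_right, hS⟩,
      mem_filter.mpr ⟨hB, hSB.trans inter_subset_left⟩⟩
  rw [← card_powersetCard]
  exact (card_le_card hcover).trans
    (card_biUnion_le_card_mul _ _ _ fun S hS ↦ hM S (mem_powersetCard.mp hS).2)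

/-- A member of `W` containing `S` contains an element of any `#A - t + 1` elements of `A \ S`. -/
theorem card_filter_subset_le_mul (hA : ∀ B ∈ W, t ≤ #(B ∩ A)) (hS : #(S ∩ A) < t)
    (hM : ∀ S', #S' = #S + 1 → #{B ∈ W | S' ⊆ B} ≤ M) :
    #{B ∈ W | S ⊆ B} ≤ (#A - t + 1) * M := by
  obtain rfl | ⟨B₀, hB₀⟩ := W.eq_empty_or_nonempty
  · simp
  have htA : t ≤ #A := (hA B₀ hB₀).trans (card_le_card inter_subset_right)
  obtain ⟨A', hA', hA't⟩ := exists_subset_card_eq (s := A \ S) (n := #A - t + 1) (by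
    have h := card_sdiff_add_card_inter A S
    rw [inter_comm A S] at h
    omega)
  have hcover : {B ∈ W | S ⊆ B} ⊆ A'.biUnion fun x ↦ {B ∈ W | insert x S ⊆ B} := fun B hB ↦ by
    rw [mem_filter] at hB
    obtain ⟨x, hx⟩ := inter_nonempty_of_card_lt_card_add_card (inter_subset_right (s₁ := B))
      (hA'.trans sdiff_subset) (by have := hA B hB.1; omega)
    exact mem_biUnion.mpr ⟨x, by grind⟩
  refine hA't ▸ (card_le_card hcover).trans (card_biUnion_le_card_mul _ _ _ fun x hx ↦ ?_)
  exact hM _ (card_insert_of_notMem (mem_sdiff.mp (hA' hx)).2)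

theorem exists_subset_inter_sdiff_card_eq {B : Finset α} {j : ℕ} (hP : t ≤ #(B ∩ P))
    (h : #(B ∩ (P ∩ Q)) + j = t) : ∃ S ⊆ B ∩ (P \ Q), #S = j := by
  refine exists_subset_card_eq ?_
  have hsplit := card_inter_add_card_sdiff (B ∩ P) Q
  rw [inter_assoc, inter_sdiff_assoc] at hsplit
  omega

/-- A member of `W` missing `j` elements of `P ∩ Q` contains `j` elements of each of `P \ Q` and
`Q \ P`. -/
theorem card_filter_card_inter_add_eq_le {j : ℕ} (hPQ : #(P ∩ Q) = t)
    (hP : ∀ B ∈ W, t ≤ #(B ∩ P)) (hQ : ∀ B ∈ W, t ≤ #(B ∩ Q))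
    (hM : ∀ S, #S = t + j → #{B ∈ W | S ⊆ B} ≤ M) :
    #{B ∈ W | #(B ∩ (P ∩ Q)) + j = t}
      ≤ t.choose j * ((#(P \ Q)).choose j * (#(Q \ P)).choose j) * M := by
  let I := powersetCard (t - j) (P ∩ Q) ×ˢ powersetCard j (P \ Q) ×ˢ powersetCard j (Q \ P)
  have hcover : {B ∈ W | #(B ∩ (P ∩ Q)) + j = t}
      ⊆ I.biUnion fun p ↦ {B ∈ W | p.1 ∪ (p.2.1 ∪ p.2.2) ⊆ B} := fun B hB ↦ by
    rw [mem_filter] at hB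
    obtain ⟨S₁, hS₁, hS₁j⟩ := exists_subset_inter_sdiff_card_eq (hP B hB.1) hB.2
    obtain ⟨S₂, hS₂, hS₂j⟩ := exists_subset_inter_sdiff_card_eq (hQ B hB.1)
      (by rw [inter_comm Q]; exact hB.2)
    refine mem_biUnion.mpr ⟨(B ∩ (P ∩ Q), S₁, S₂), ?_, mem_filter.mpr ⟨hB.1, by grind⟩⟩
    simp only [I, mem_product, mem_powersetCard]
    exact ⟨⟨inter_subset_right, by omega⟩, ⟨by grind, hS₁j⟩, by grind, hS₂j⟩
  obtain hj | hj := lt_or_ge t j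
  · rw [filter_eq_empty_iff.mpr fun B _ ↦ by omega, card_empty]
    exact Nat.zero_le _
  have hI : #I = t.choose j * ((#(P \ Q)).choose j * (#(Q \ P)).choose j) := by
    simp only [I, card_product, card_powersetCard, hPQ, Nat.choose_symm hj]
  rw [← hI]
  refine (card_le_card hcover).trans (card_biUnion_le_card_mul _ _ _ fun p hp ↦ hM _ ?_)
  simp only [I, mem_product, mem_powersetCard] at hp
  obtain ⟨⟨h₁, h₁j⟩, ⟨h₂, h₂j⟩, h₃, h₃j⟩ := hp
  rw [card_union_of_disjoint (by grind [disjoint_left]),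
    card_union_of_disjoint (by grind [disjoint_left])]
  omega

theorem card_le_sum_choose_mul {d : ℕ} {M : ℕ → ℕ} (hPQ : #(P ∩ Q) = t) (hPd : #P ≤ t + d)
    (hQd : #Q ≤ t + d) (hP : ∀ B ∈ W, t ≤ #(B ∩ P)) (hQ : ∀ B ∈ W, t ≤ #(B ∩ Q))
    (hM : ∀ j ≤ d, ∀ S, #S = t + j → #{B ∈ W | S ⊆ B} ≤ M j) :
    #W ≤ ∑ j ∈ range (d + 1), t.choose j * (d.choose j * d.choose j) * M j := by
  have hsdiff : #(P \ Q) ≤ d ∧ #(Q \ P) ≤ d := by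
    have h₁ := card_sdiff_add_card_inter P Q
    have h₂ := card_sdiff_add_card_inter Q P
    rw [inter_comm Q P] at h₂
    omega
  rw [card_eq_sum_card_fiberwise (f := fun B ↦ t - #(B ∩ (P ∩ Q))) (t := range (d + 1))
    fun B hB ↦ ?_]
  · refine sum_le_sum fun j hj ↦ ?_
    have hfiber : {B ∈ W | t - #(B ∩ (P ∩ Q)) = j} ⊆ {B ∈ W | #(B ∩ (P ∩ Q)) + j = t} := by
      refine monotone_filter_right _ fun B _ hB ↦ ?_
      have := card_le_card (inter_subset_right (s₁ := B) (s₂ := P ∩ Q))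
      omega
    refine (card_le_card hfiber).trans ((card_filter_card_inter_add_eq_le hPQ hP hQ
      (hM j (by rw [mem_range] at hj; omega))).trans ?_)
    gcongr <;> simp only [hsdiff]
  · have h₁ := hP B hB
    have h₂ : #(B ∩ P) ≤ #(B ∩ (P ∩ Q)) + #(P \ Q) :=
      (card_le_card (show B ∩ P ⊆ B ∩ (P ∩ Q) ∪ P \ Q by grind)).trans (card_union_le _ _)
    simp only [mem_coe, mem_range]
    omega

theorem succ_le_card_inter_of_card_inter_inter_lt {D₁ D₂ D₃ Y : Finset α} (h₁ : D₁ ⊆ Y)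
    (h₂ : D₂ ⊆ Y) (h₃ : D₃ ⊆ Y) (ht₁ : t ≤ #(D₁ ∩ A)) (ht₂ : t ≤ #(D₂ ∩ A)) (ht₃ : t ≤ #(D₃ ∩ A))
    (hlt : #(D₁ ∩ D₂ ∩ D₃) < t) : t + 1 ≤ #(A ∩ Y) := by
  by_contra! hAY
  have hsub (D : Finset α) (hD : D ⊆ Y) (htD : t ≤ #(D ∩ A)) : A ∩ Y ⊆ D :=
    (eq_of_subset_of_card_le (show D ∩ A ⊆ A ∩ Y by grind) (by omega)).ge.trans inter_subset_left
  have hcard : #(A ∩ Y) ≤ #(D₁ ∩ D₂ ∩ D₃) := card_le_card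
    (subset_inter (subset_inter (hsub D₁ h₁ ht₁) (hsub D₂ h₂ ht₂)) (hsub D₃ h₃ ht₃))
  have := ht₁.trans (card_le_card (show D₁ ∩ A ⊆ A ∩ Y by grind))
  omega

end Branching

section Families

variable {n k t : ℕ} {F G T : Finset (Finset ℕ)} {X Y : Finset ℕ}

/-- A family is trivially `t`-intersecting if its members share `t` common elements. -/
def TriviallyIntersecting (t : ℕ) (T : Finset (Finset ℕ)) : Prop :=
  ∃ C : Finset ℕ, #C = t ∧ ∀ B ∈ T, C ⊆ B

/-- The subsets of `[n]` of size less than `k` that meet the window `Y` in at least `t` elements: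
the possible intersections of `k`-sets meeting a `(t + 2)`-set `Y` in at least `t + 1` elements. -/
def heavySets (n k t : ℕ) (Y : Finset ℕ) : Finset (Finset ℕ) :=
  {X ∈ (Icc 1 n).powerset | t ≤ #(X ∩ Y) ∧ #X < k}

theorem mem_interFam : X ∈ interFam F ↔ ∃ A ∈ F, ∃ B ∈ F, A ≠ B ∧ A ∩ B = X := by
  simp only [interFam, mem_image, mem_filter, mem_product, Prod.exists]
  grind

theorem interFam_mono (h : F ⊆ G) : interFam F ⊆ interFam G :=
  image_subset_image (filter_subset_filter _ (product_subset_product h h))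

theorem interFam_subset_filter (hF : F ⊆ (Icc 1 n).powersetCard k) :
    interFam F ⊆ {X ∈ (Icc 1 n).powerset | #X < k} := fun X hX ↦ by
  obtain ⟨A, hA, B, hB, hAB, rfl⟩ := mem_interFam.mp hX
  obtain ⟨hAn, hAk⟩ := mem_powersetCard.mp (hF hA)
  exact mem_filter.mpr ⟨mem_powerset.mpr (inter_subset_left.trans hAn),
    card_inter_lt_of_ne hAk (mem_powersetCard.mp (hF hB)).2 hAB⟩

theorem interFam_subset_heavySets (hF : F ⊆ (Icc 1 n).powersetCard k) (hY : #Y = t + 2)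
    (h : ∀ A ∈ F, t + 1 ≤ #(A ∩ Y)) : interFam F ⊆ heavySets n k t Y := fun X hX ↦ by
  obtain ⟨hXn, hXk⟩ := mem_filter.mp (interFam_subset_filter hF hX)
  obtain ⟨A, hA, B, hB, -, rfl⟩ := mem_interFam.mp hX
  refine mem_filter.mpr ⟨hXn, ?_, hXk⟩
  have hunion := card_union_add_card_inter (A ∩ Y) (B ∩ Y)
  rw [← inter_inter_distrib_right] at hunion
  have hle : #(A ∩ Y ∪ B ∩ Y) ≤ #Y :=
    card_le_card (union_subset inter_subset_right inter_subset_right)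
  have := h A hA
  have := h B hB
  omega

theorem exists_inter_eq_and_succ_le_card_inter (hY : t + 2 ≤ #Y) (hX : t ≤ #(X ∩ Y)) :
    ∃ P Q, P ∩ Q = X ∧ P ⊆ X ∪ Y ∧ Q ⊆ X ∪ Y ∧ #P ≤ #X + 1 ∧ #Q ≤ #X + 1 ∧
      t + 1 ≤ #(P ∩ Y) ∧ t + 1 ≤ #(Q ∩ Y) := by
  obtain hX | hX := hX.lt_or_eq
  · exact ⟨X, X, inter_self X, subset_union_left, subset_union_left, by omega, by omega, hX, hX⟩
  obtain ⟨a, ha, b, hb, hab⟩ : ∃ a ∈ Y \ X, ∃ b ∈ Y \ X, a ≠ b := by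
    refine one_lt_card.mp ?_
    have h := card_sdiff_add_card_inter Y X
    rw [inter_comm Y X] at h
    omega
  have hinsert {c : ℕ} (hc : c ∈ Y \ X) : t + 1 ≤ #(insert c X ∩ Y) := by
    rw [mem_sdiff] at hc
    rw [insert_inter_of_mem hc.1, card_insert_of_notMem fun h ↦ hc.2 (mem_inter.mp h).1, hX]
  exact ⟨insert a X, insert b X, by grind, by grind, by grind, card_insert_le _ _,
    card_insert_le _ _, hinsert ha, hinsert hb⟩

theorem interFam_At (hk : t + 2 ≤ k) (hn : 2 * k ≤ n) :
    interFam (At n k t) = heavySets n k t (Icc 1 (t + 2)) := by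
  refine (interFam_subset_heavySets (filter_subset _ _) (by simp)
    fun A hA ↦ (mem_filter.mp hA).2).antisymm fun X hX ↦ ?_
  simp only [heavySets, mem_filter, mem_powerset] at hX
  obtain ⟨hXn, hXt, hXk⟩ := hX
  obtain ⟨P, Q, rfl, hP, hQ, hPX, hQX, hPt, hQt⟩ :=
    exists_inter_eq_and_succ_le_card_inter (by simp) hXt
  have hunion : P ∩ Q ∪ Icc 1 (t + 2) ⊆ Icc 1 n :=
    union_subset hXn (Icc_subset_Icc le_rfl (by omega))
  obtain ⟨A, B, hPA, hQB, hAn, hBn, hA, hB, hAB⟩ := exists_card_eq_inter_eq (hP.trans hunion)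
    (hQ.trans hunion) (k := k) (by omega) (by omega) (by simpa using hn)
  refine mem_interFam.mpr ⟨A, ?_, B, ?_, ?_, hAB⟩
  · exact mem_filter.mpr ⟨mem_powersetCard.mpr ⟨hAn, hA⟩,
      hPt.trans (card_le_card (inter_subset_inter_right hPA))⟩
  · exact mem_filter.mpr ⟨mem_powersetCard.mpr ⟨hBn, hB⟩,
      hQt.trans (card_le_card (inter_subset_inter_right hQB))⟩
  · rintro rfl
    rw [← hAB, inter_self] at hXk
    omega

theorem card_heavySets (hYn : Y ⊆ Icc 1 n) (hY : #Y = t + 2) :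
    #(heavySets n k t Y) = (t + 2).choose 2 * chooseSum (n - t - 2) (k - t)
      + (t + 2) * chooseSum (n - t - 2) (k - t - 1) + chooseSum (n - t - 2) (k - t - 2) := by
  have hset : heavySets n k t Y = {X ∈ (Icc 1 n).powerset |
      #(X ∩ Y) ∈ Icc t (t + 2) ∧ #(X \ Y) < k - #(X ∩ Y)} := by
    refine filter_congr fun X _ ↦ ?_
    have h₁ := card_sdiff_add_card_inter X Y
    have h₂ : #(X ∩ Y) ≤ #Y := card_le_card inter_subset_right
    rw [mem_Icc]
    omega
  have hsdiff : #(Icc 1 n \ Y) = n - t - 2 := by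
    rw [card_sdiff_of_subset hYn, Nat.card_Icc, hY]
    omega
  have hsymm : (t + 2).choose t = (t + 2).choose 2 := Nat.choose_symm_add
  rw [hset, card_filter_powerset_card_inter_mem (r := (k - ·)), inter_eq_right.mpr hYn, hsdiff, hY,
    ← Ico_add_one_right_eq_Icc, sum_Ico_eq_sum_range, show t + 2 + 1 - t = 3 by omega]
  simp [sum_range_succ, hsymm, Nat.choose_succ_self_right, Nat.sub_add_eq]

theorem exists_saturated (hF : F ⊆ (Icc 1 n).powersetCard k) (hFt : tIntersecting t F) :
    ∃ G, F ⊆ G ∧ G ⊆ (Icc 1 n).powersetCard k ∧ tIntersecting t G ∧ saturated n k t G := by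
  classical
  obtain ⟨G, hFG, hG⟩ := exists_le_maximal {G ∈ ((Icc 1 n).powersetCard k).powerset |
    tIntersecting t G} (mem_filter.mpr ⟨mem_powerset.mpr hF, hFt⟩)
  obtain ⟨hGn, hGt⟩ := mem_filter.mp hG.prop
  rw [mem_powerset] at hGn
  refine ⟨G, hFG, hGn, hGt, fun A hA hAG hins ↦ hAG ?_⟩
  exact hG.le_of_ge (mem_filter.mpr ⟨mem_powerset.mpr (insert_subset hA hGn), hins⟩)
    (subset_insert A G) (mem_insert_self A G)

theorem saturated.mem_of_le_card_inter (hs : saturated n k t F) (hFt : tIntersecting t F)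
    (htk : t ≤ k) {A : Finset ℕ} (hA : A ∈ (Icc 1 n).powersetCard k)
    (h : ∀ B ∈ F, t ≤ #(A ∩ B)) : A ∈ F := by
  by_contra hAF
  refine hs A hA hAF fun B hB C hC ↦ ?_
  obtain rfl | hBF := mem_insert.mp hB <;> obtain rfl | hCF := mem_insert.mp hC
  · rwa [inter_self, (mem_powersetCard.mp hA).2]
  · exact h C hCF
  · rw [inter_comm]
    exact h B hBF
  · exact hFt B hBF C hCF

/-- Two transversals extend to members of the saturated family without enlarging their
intersection. -/
theorem saturated.tIntersecting_transv (hs : saturated n k t F) (hFt : tIntersecting t F)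
    (htk : t ≤ k) (hn : 2 * k ≤ n) : tIntersecting t (transv n k t F) := by
  intro P hP Q hQ
  simp only [transv, mem_filter, mem_powerset] at hP hQ
  obtain ⟨A, B, hPA, hQB, hAn, hBn, hA, hB, hAB⟩ :=
    exists_card_eq_inter_eq hP.1 hQ.1 hP.2.1 hQ.2.1 (by simpa using hn)
  have hmem {S C : Finset ℕ} (hS : ∀ B ∈ F, t ≤ #(S ∩ B)) (hSC : S ⊆ C) (hCn : C ⊆ Icc 1 n)
      (hC : #C = k) : C ∈ F :=
    hs.mem_of_le_card_inter hFt htk (mem_powersetCard.mpr ⟨hCn, hC⟩) fun B hB ↦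
      (hS B hB).trans (card_le_card (inter_subset_inter_right hSC))
  rw [← hAB]
  exact hFt A (hmem hP.2.2 hPA hAn hA) B (hmem hQ.2.2 hQB hBn hB)

theorem subset_transv (hF : F ⊆ (Icc 1 n).powersetCard k) (hFt : tIntersecting t F) :
    F ⊆ transv n k t F := fun A hA ↦ by
  obtain ⟨hAn, hAk⟩ := mem_powersetCard.mp (hF hA)
  exact mem_filter.mpr ⟨mem_powerset.mpr hAn, hAk.le, hFt A hA⟩

theorem exists_subset_mem_minFam {A : Finset ℕ} (hA : A ∈ T) : ∃ B ∈ minFam T, B ⊆ A := by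
  obtain ⟨B, hBA, hB⟩ := exists_le_minimal T hA
  exact ⟨B, mem_filter.mpr ⟨hB.prop, fun B' hB' h ↦ hB.eq_of_le hB' h⟩, hBA⟩

/-- All members have size `t + 1`; any two span a `(t + 2)`-set, which contains every third member
that does not contain their intersection. -/
theorem exists_card_union_eq_of_not_triviallyIntersecting (hT : tIntersecting t T)
    (hcard : ∀ B ∈ T, #B ≤ t + 1) (h : ¬ TriviallyIntersecting t T) :
    ∃ D₁ ∈ T, ∃ D₂ ∈ T, ∃ D₃ ∈ T, #(D₁ ∪ D₂) = t + 2 ∧ D₃ ⊆ D₁ ∪ D₂ ∧ #(D₁ ∩ D₂ ∩ D₃) < t := by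
  have hmiss (C : Finset ℕ) (hC : #C = t) : ∃ B ∈ T, ¬ C ⊆ B := by
    by_contra! hCT
    exact h ⟨C, hC, hCT⟩
  have hT₁ : ∀ B ∈ T, #B = t + 1 := fun B hB ↦ by
    have hBt := inter_self B ▸ hT B hB B hB
    refine (hcard B hB).antisymm (hBt.lt_of_ne fun hBt ↦ ?_)
    obtain ⟨D, hD, hBD⟩ := hmiss B hBt.symm
    exact hBD (inter_eq_left.mp
      (eq_of_subset_of_card_le inter_subset_left (hBt.symm.le.trans (hT B hB D hD))))
  obtain ⟨C₀, hC₀⟩ := exists_subset_card_eq (s := range t) (n := t) (by simp)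
  obtain ⟨D₁, hD₁, -⟩ := hmiss C₀ hC₀.2
  obtain ⟨C, hCD₁, hC⟩ := exists_subset_card_eq (s := D₁) (n := t) (by rw [hT₁ D₁ hD₁]; omega)
  obtain ⟨D₂, hD₂, hCD₂⟩ := hmiss C hC
  have hlt := card_inter_lt_of_ne (hT₁ D₁ hD₁) (hT₁ D₂ hD₂) (by rintro rfl; exact hCD₂ hCD₁)
  have hinter : #(D₁ ∩ D₂) = t := by have := hT D₁ hD₁ D₂ hD₂; omega
  obtain ⟨D₃, hD₃, hnot⟩ := hmiss _ hinter
  have hlt₃ : #(D₁ ∩ D₂ ∩ D₃) < t :=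
    hinter ▸ card_lt_card (inter_subset_left.ssubset_of_ne fun h ↦ hnot (inter_eq_left.mp h))
  refine ⟨D₁, hD₁, D₂, hD₂, D₃, hD₃, ?_, ?_, hlt₃⟩
  · have := card_union_add_card_inter D₁ D₂
    have := hT₁ D₁ hD₁
    have := hT₁ D₂ hD₂
    omega
  · have hsplit := card_union_add_card_inter (D₁ ∩ D₃) (D₂ ∩ D₃)
    rw [← inter_inter_distrib_right, ← union_inter_distrib_right] at hsplit
    have := hT D₁ hD₁ D₃ hD₃
    have := hT D₂ hD₂ D₃ hD₃
    have := hT₁ D₃ hD₃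
    exact inter_eq_right.mp (eq_of_subset_of_card_le inter_subset_right (by omega))

end Families

section MinimalTransversals

/-- The minimal `t`-transversals of size `l`. -/
def minTransv (n k t : ℕ) (F : Finset (Finset ℕ)) (l : ℕ) : Finset (Finset ℕ) :=
  {B ∈ minFam (transv n k t F) | #B = l}

/-- The minimal `t`-transversals of size at most `l`. -/
def minTransvLE (n k t : ℕ) (F : Finset (Finset ℕ)) (l : ℕ) : Finset (Finset ℕ) :=
  {B ∈ minFam (transv n k t F) | #B ≤ l}

variable {n k t l a : ℕ} {F : Finset (Finset ℕ)} {B S : Finset ℕ}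

theorem mem_transv :
    B ∈ transv n k t F ↔ B ⊆ Icc 1 n ∧ #B ≤ k ∧ ∀ A ∈ F, t ≤ #(B ∩ A) := by
  rw [transv, mem_filter, mem_powerset]

theorem minTransv_subset_transv : minTransv n k t F l ⊆ transv n k t F :=
  (filter_subset _ _).trans (filter_subset _ _)

theorem minTransvLE_subset_transv : minTransvLE n k t F l ⊆ transv n k t F :=
  (filter_subset _ _).trans (filter_subset _ _)

theorem notMem_transv_of_mem_minTransv (hB : B ∈ minTransv n k t F l) (hSB : S ⊆ B)
    (hS : #S < l) : S ∉ transv n k t F := fun hSF ↦ by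
  obtain ⟨hBmin, rfl⟩ := mem_filter.mp hB
  exact hS.ne (congrArg card ((mem_filter.mp hBmin).2 S hSF hSB))

theorem exists_card_inter_lt_of_mem_minTransv (hB : B ∈ minTransv n k t F l) (hSB : S ⊆ B)
    (hS : #S < l) : ∃ A ∈ F, #(S ∩ A) < t := by
  by_contra! h
  obtain ⟨hBn, hBk, -⟩ := mem_transv.mp (minTransv_subset_transv hB)
  exact notMem_transv_of_mem_minTransv hB hSB hS
    (mem_transv.mpr ⟨hSB.trans hBn, (card_le_card hSB).trans hBk, h⟩)

theorem card_minTransv_filter_subset_le (hF : F ⊆ (Icc 1 n).powersetCard k) :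
    #{B ∈ minTransv n k t F l | S ⊆ B} ≤ (k - t + 1) ^ (l - #S) := by
  induction hr : l - #S generalizing S with
  | zero =>
    have heq : ∀ B ∈ minTransv n k t F l, S ⊆ B → B = S := fun B hB hSB ↦
      (eq_of_subset_of_card_le hSB (by have := (mem_filter.mp hB).2; omega)).symm
    refine card_le_one.mpr fun B hB B' hB' ↦ ?_
    rw [mem_filter] at hB hB'
    rw [heq B hB.1 hB.2, heq B' hB'.1 hB'.2]
  | succ r ih =>
    obtain hempty | ⟨B₀, hB₀⟩ := {B ∈ minTransv n k t F l | S ⊆ B}.eq_empty_or_nonempty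
    · rw [hempty, card_empty]
      exact Nat.zero_le _
    obtain ⟨hB₀, hSB₀⟩ := mem_filter.mp hB₀
    obtain ⟨A, hA, hSA⟩ := exists_card_inter_lt_of_mem_minTransv hB₀ hSB₀ (by omega)
    rw [pow_succ', ← (mem_powersetCard.mp (hF hA)).2]
    refine card_filter_subset_le_mul (fun B hB ↦ ?_) hSA fun S' hS' ↦ ?_
    · exact (mem_transv.mp (minTransv_subset_transv hB)).2.2 A hA
    · rw [(mem_powersetCard.mp (hF hA)).2]
      exact ih (by omega)

theorem card_minTransv_filter_subset_le_of_not_triviallyIntersecting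
    (hF : F ⊆ (Icc 1 n).powersetCard k) (hT : tIntersecting t (transv n k t F))
    (h : ¬ TriviallyIntersecting t (minTransvLE n k t F l)) (hS : #S = t) :
    #{B ∈ minTransv n k t F l | S ⊆ B} ≤ (l - t + 1) * (k - t + 1) ^ (l - t - 1) := by
  obtain ⟨A, hA, hSA⟩ : ∃ A ∈ minTransvLE n k t F l, ¬ S ⊆ A := by
    by_contra! hall
    exact h ⟨S, hS, hall⟩
  have hlt : #(S ∩ A) < t :=
    hS ▸ card_lt_card (inter_subset_left.ssubset_of_ne fun h ↦ hSA (inter_eq_left.mp h))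
  calc #{B ∈ minTransv n k t F l | S ⊆ B} ≤ (#A - t + 1) * (k - t + 1) ^ (l - t - 1) := by
        refine card_filter_subset_le_mul (fun B hB ↦ ?_) hlt fun S' hS' ↦ ?_
        · exact hT B (minTransv_subset_transv hB) A (minTransvLE_subset_transv hA)
        · rw [Nat.sub_sub, ← hS, ← hS']
          exact card_minTransv_filter_subset_le hF
    _ ≤ (l - t + 1) * (k - t + 1) ^ (l - t - 1) := by
        gcongr
        exact (mem_filter.mp hA).2

theorem card_minTransv_le (hF : F ⊆ (Icc 1 n).powersetCard k)
    (hT : tIntersecting t (transv n k t F))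
    (h : ¬ TriviallyIntersecting t (minTransvLE n k t F l)) :
    #(minTransv n k t F l) ≤ l.choose t * ((l - t + 1) * (k - t + 1) ^ (l - t - 1)) := by
  obtain hempty | ⟨D, hD⟩ := (minTransv n k t F l).eq_empty_or_nonempty
  · rw [hempty, card_empty]
    exact Nat.zero_le _
  rw [← (mem_filter.mp hD).2]
  refine card_le_choose_mul_of_le_card_inter (fun B hB ↦ ?_) fun S hS ↦ ?_
  · exact hT B (minTransv_subset_transv hB) D (minTransv_subset_transv hD)
  · rw [(mem_filter.mp hD).2]
    exact card_minTransv_filter_subset_le_of_not_triviallyIntersecting hF hT h hS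

theorem card_minTransv_add_two_le_of_tIntersecting (hF : F ⊆ (Icc 1 n).powersetCard k)
    (h : tIntersecting (t + 1) (minTransv n k t F (t + 2))) :
    #(minTransv n k t F (t + 2)) ≤ (t + 2) * (k - t + 1) := by
  obtain hempty | ⟨D, hD⟩ := (minTransv n k t F (t + 2)).eq_empty_or_nonempty
  · rw [hempty, card_empty]
    exact Nat.zero_le _
  have hle := card_le_choose_mul_of_le_card_inter (fun B hB ↦ h B hB D hD) fun S hS ↦
    (card_minTransv_filter_subset_le (S := S) hF).trans_eq (by
      rw [hS, show t + 2 - (t + 1) = 1 by omega, pow_one])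
  rwa [(mem_filter.mp hD).2, Nat.choose_succ_self_right] at hle

theorem card_minTransv_add_two_le (hF : F ⊆ (Icc 1 n).powersetCard k)
    (hT : tIntersecting t (transv n k t F))
    (h : ¬ TriviallyIntersecting t (minTransvLE n k t F (t + 2))) :
    #(minTransv n k t F (t + 2)) ≤ (4 * t + 3) * (k - t + 1) + t.choose 2 := by
  by_cases hinter : tIntersecting (t + 1) (minTransv n k t F (t + 2))
  · calc #(minTransv n k t F (t + 2)) ≤ (t + 2) * (k - t + 1) :=
          card_minTransv_add_two_le_of_tIntersecting hF hinter
      _ ≤ (4 * t + 3) * (k - t + 1) := by gcongr <;> omega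
      _ ≤ (4 * t + 3) * (k - t + 1) + t.choose 2 := Nat.le_add_right _ _
  simp only [tIntersecting, not_forall, not_le] at hinter
  obtain ⟨P, hP, Q, hQ, hPQ⟩ := hinter
  have hmeet : ∀ A ∈ minTransv n k t F (t + 2), ∀ B ∈ minTransv n k t F (t + 2), t ≤ #(A ∩ B) :=
    fun A hA B hB ↦ hT A (minTransv_subset_transv hA) B (minTransv_subset_transv hB)
  let M : ℕ → ℕ
    | 0 => 3 * (k - t + 1)
    | 1 => k - t + 1
    | _ => 1
  have hle := card_le_sum_choose_mul (d := 2) (M := M) (by have := hmeet P hP Q hQ; omega)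
    (mem_filter.mp hP).2.le (mem_filter.mp hQ).2.le (fun B hB ↦ hmeet B hB P hP)
    (fun B hB ↦ hmeet B hB Q hQ) fun j hj S hS ↦ ?_
  · simp only [sum_range_succ, sum_range_zero, M, Nat.choose_zero_right, Nat.choose_one_right,
      Nat.choose_self] at hle
    linarith
  · have hpow := card_minTransv_filter_subset_le (t := t) (l := t + 2) (S := S) hF
    interval_cases j
    · exact (card_minTransv_filter_subset_le_of_not_triviallyIntersecting hF hT h hS).trans_eq
        (by simp [M])
    · simpa [hS, M] using hpow
    · simpa [hS, M] using hpow

theorem exists_forall_succ_le_card_inter (hT : tIntersecting t (transv n k t F))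
    (h : ¬ TriviallyIntersecting t (minTransvLE n k t F (t + 1))) :
    ∃ Y ⊆ Icc 1 n, #Y = t + 2 ∧ ∀ A ∈ F, t + 1 ≤ #(A ∩ Y) := by
  have hsub := minTransvLE_subset_transv (n := n) (k := k) (t := t) (l := t + 1) (F := F)
  obtain ⟨D₁, hD₁, D₂, hD₂, D₃, hD₃, hcard, hD₃sub, hlt⟩ :=
    exists_card_union_eq_of_not_triviallyIntersecting
      (fun A hA B hB ↦ hT A (hsub hA) B (hsub hB)) (fun B hB ↦ (mem_filter.mp hB).2) h
  obtain ⟨hD₁n, -, hD₁F⟩ := mem_transv.mp (hsub hD₁)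
  obtain ⟨hD₂n, -, hD₂F⟩ := mem_transv.mp (hsub hD₂)
  have hD₃F := (mem_transv.mp (hsub hD₃)).2.2
  exact ⟨D₁ ∪ D₂, union_subset hD₁n hD₂n, hcard, fun A hA ↦
    succ_le_card_inter_of_card_inter_inter_lt subset_union_left subset_union_right hD₃sub
      (hD₁F A hA) (hD₂F A hA) (hD₃F A hA) hlt⟩

/-- The candidates for an intersection `A ∩ A'` of members of `F` such that `A` contains the
transversal `B`. -/
def interCandidates (n k t : ℕ) (B : Finset ℕ) : Finset (Finset ℕ) :=
  {X ∈ (Icc 1 n).powerset | t ≤ #(X ∩ B) ∧ #(X \ B) < k - #B + 1}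

/-- The bound on the number of intersections caused by a single transversal of size `l`. -/
def coverWeight (n k t l : ℕ) : ℕ := chooseSum l (l - t + 1) * chooseSum n (k - l + 1)

theorem card_interCandidates_le (hB : t ≤ #B) :
    #(interCandidates n k t B) ≤ coverWeight n k t #B := by
  simpa [interCandidates, coverWeight] using
    card_filter_powerset_le_card_inter_le (Icc 1 n) (k - #B + 1) hB

theorem inter_mem_interCandidates {A A' : Finset ℕ} (hA : A ∈ (Icc 1 n).powersetCard k)
    (hBA : B ⊆ A) (hBA' : t ≤ #(B ∩ A')) : A ∩ A' ∈ interCandidates n k t B := by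
  obtain ⟨hAn, hAk⟩ := mem_powersetCard.mp hA
  refine mem_filter.mpr ⟨mem_powerset.mpr (inter_subset_left.trans hAn), ?_, Nat.lt_succ_of_le ?_⟩
  · rwa [inter_right_comm, inter_eq_right.mpr hBA]
  · rw [← hAk, ← card_sdiff_of_subset hBA]
    exact card_le_card (sdiff_subset_sdiff inter_subset_left le_rfl)

theorem interFam_subset_union {C : Finset ℕ} (hF : F ⊆ (Icc 1 n).powersetCard k)
    (hFt : tIntersecting t F) (hC : ∀ B ∈ minTransvLE n k t F a, C ⊆ B) :
    interFam F ⊆ {X ∈ (Icc 1 n).powerset | C ⊆ X ∧ #X < k} ∪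
      (Ioc a k).biUnion fun l ↦ (minTransv n k t F l).biUnion (interCandidates n k t) :=
    fun X hX ↦ by
  obtain ⟨hXn, hXk⟩ := mem_filter.mp (interFam_subset_filter hF hX)
  obtain ⟨A, hA, A', hA', -, rfl⟩ := mem_interFam.mp hX
  obtain ⟨B, hB, hBA⟩ := exists_subset_mem_minFam (subset_transv hF hFt hA)
  obtain ⟨B', hB', hBA'⟩ := exists_subset_mem_minFam (subset_transv hF hFt hA')
  obtain ⟨-, hBk, hBF⟩ := mem_transv.mp (mem_filter.mp hB).1
  obtain ⟨-, hBk', hBF'⟩ := mem_transv.mp (mem_filter.mp hB').1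
  rw [mem_union]
  obtain hBa | hBa := lt_or_ge a #B
  · exact .inr (mem_biUnion.mpr ⟨#B, mem_Ioc.mpr ⟨hBa, hBk⟩, mem_biUnion.mpr
      ⟨B, mem_filter.mpr ⟨hB, rfl⟩, inter_mem_interCandidates (hF hA) hBA (hBF A' hA')⟩⟩)
  obtain hBa' | hBa' := lt_or_ge a #B'
  · rw [inter_comm A A']
    exact .inr (mem_biUnion.mpr ⟨#B', mem_Ioc.mpr ⟨hBa', hBk'⟩, mem_biUnion.mpr
      ⟨B', mem_filter.mpr ⟨hB', rfl⟩, inter_mem_interCandidates (hF hA') hBA' (hBF' A hA)⟩⟩)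
  · exact .inl (mem_filter.mpr ⟨hXn, subset_inter ((hC B (mem_filter.mpr ⟨hB, hBa⟩)).trans hBA)
      ((hC B' (mem_filter.mpr ⟨hB', hBa'⟩)).trans hBA'), hXk⟩)

theorem card_interFam_le_add_sum (hF : F ⊆ (Icc 1 n).powersetCard k) (hFt : tIntersecting t F)
    (hta : t ≤ a) (h : TriviallyIntersecting t (minTransvLE n k t F a)) :
    #(interFam F) ≤ chooseSum (n - t) (k - t)
      + ∑ l ∈ Ioc a k, #(minTransv n k t F l) * coverWeight n k t l := by
  obtain ⟨C, rfl, hC⟩ := h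
  refine (card_le_card (interFam_subset_union hF hFt hC)).trans ((card_union_le _ _).trans ?_)
  gcongr
  · simpa using card_filter_powerset_subset_card_lt_le (Icc 1 n) C k
  · refine card_biUnion_le.trans (sum_le_sum fun l hl ↦
      card_biUnion_le_card_mul _ _ _ fun B hB ↦ ?_)
    obtain ⟨-, rfl⟩ := mem_filter.mp hB
    exact card_interCandidates_le (hta.trans (mem_Ioc.mp hl).1.le)

end MinimalTransversals

section Inequality

/-- The right-hand side of the inequality assumed in `stmt15`, which is
`|I(A_t)| - chooseSum (n - t) (k - t)` by `excess_add_chooseSum` below. -/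
def excess (n k t : ℕ) : ℕ :=
  (n - t - 1).choose (k - t - 1)
    + ((t + 2) * (t + 1) - 4) / 2 * (n - t - 2).choose (k - t - 1)
    + ((t + 3) * (t + 2) - 8) / 2 * chooseSum (n - t - 2) (k - t - 1)
    + chooseSum (n - t - 2) (k - t - 2)

/-- The bound of `card_minTransv_le` for transversals of size `t + 2 + i`, with `K = k - t + 1`. -/
def minTransvBound (t K i : ℕ) : ℕ := (t + 2 + i).choose t * ((i + 3) * K ^ (i + 1))

variable {n p t K : ℕ}

theorem choose_add_three_two (t : ℕ) : (t + 3).choose 2 = (t + 2).choose 2 + (t + 2) := by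
  rw [Nat.choose_succ_succ', Nat.choose_one_right, add_comm]

theorem excess_eq (n k t : ℕ) :
    excess n k t = (n - t - 1).choose (k - t - 1)
      + ((t + 2).choose 2 - 2) * (n - t - 2).choose (k - t - 1)
      + ((t + 3).choose 2 - 4) * chooseSum (n - t - 2) (k - t - 1)
      + chooseSum (n - t - 2) (k - t - 2) := by
  have h₂ : ((t + 2) * (t + 1) - 4) / 2 = (t + 2).choose 2 - 2 := by
    rw [← two_mul_choose_add_two_two]
    omega
  have h₃ : ((t + 3) * (t + 2) - 8) / 2 = (t + 3).choose 2 - 4 := by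
    have h : 2 * (t + 3).choose 2 = (t + 3) * (t + 2) := two_mul_choose_add_two_two (t + 1)
    omega
  rw [excess, h₂, h₃]

theorem three_le_choose_add_two_two (ht : 1 ≤ t) : 3 ≤ (t + 2).choose 2 :=
  Nat.choose_le_choose 2 (show 3 ≤ t + 2 by omega)

theorem excess_add_chooseSum {k : ℕ} (ht : 1 ≤ t) (hk : t + 2 ≤ k) (hn : t + 2 ≤ n) :
    excess n k t + chooseSum (n - t) (k - t)
      = (t + 2).choose 2 * chooseSum (n - t - 2) (k - t)
        + (t + 2) * chooseSum (n - t - 2) (k - t - 1) + chooseSum (n - t - 2) (k - t - 2) := by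
  obtain ⟨m, rfl⟩ := Nat.exists_eq_add_of_le' hn
  obtain ⟨p, rfl⟩ := Nat.exists_eq_add_of_le' hk
  obtain ⟨u, hu⟩ := Nat.exists_eq_add_of_le' (three_le_choose_add_two_two ht)
  rw [excess_eq, choose_add_three_two, hu, show m + (t + 2) - t = m + 1 + 1 by omega,
    show p + (t + 2) - t = p + 1 + 1 by omega, show u + 3 - 2 = u + 1 by omega,
    show u + 3 + (t + 2) - 4 = u + t + 1 by omega]
  simp only [show m + 1 + 1 - 2 = m from rfl, show p + 1 + 1 - 2 = p from rfl,
    Nat.add_one_sub_one, chooseSum_succ_succ, chooseSum_succ,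
    Nat.choose_succ_succ']
  ring

theorem two_mul_excess_le (ht : 1 ≤ t) :
    2 * excess n (t + 2 + p) t
      ≤ (t ^ 2 + 3 * t) * n.choose (p + 1) + (t ^ 2 + 5 * t + 8) * chooseSum n (p + 1) := by
  obtain ⟨u, hu⟩ := Nat.exists_eq_add_of_le' (three_le_choose_add_two_two ht)
  have hut := two_mul_choose_add_two_two t
  rw [hu] at hut
  rw [excess_eq, choose_add_three_two, hu, show t + 2 + p - t - 1 = p + 1 by omega,
    show u + 3 - 2 = u + 1 by omega, show u + 3 + (t + 2) - 4 = u + t + 1 by omega]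
  have hsum {r : ℕ} (hr : r ≤ p + 1) : chooseSum (n - t - 2) r ≤ chooseSum n (p + 1) :=
    chooseSum_le_chooseSum (by omega) hr
  calc _ ≤ 2 * (n.choose (p + 1) + (u + 1) * n.choose (p + 1)
          + (u + t + 1) * chooseSum n (p + 1) + chooseSum n (p + 1)) := by
        gcongr
        · omega
        · omega
        · exact hsum le_rfl
        · exact hsum (by omega)
    _ = (2 * u + 4) * n.choose (p + 1) + (2 * u + 2 * t + 4) * chooseSum n (p + 1) := by ring
    _ ≤ (2 * u + 4) * n.choose (p + 1) + (2 * u + 2 * t + 12) * chooseSum n (p + 1) := by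
        gcongr
        omega
    _ = _ := by
        rw [show t ^ 2 + 3 * t = 2 * u + 4 by linarith,
          show t ^ 2 + 5 * t + 8 = 2 * u + 2 * t + 12 by linarith]

theorem nine_mul_minTransvBound_succ_le (t K i : ℕ) :
    9 * minTransvBound t K (i + 1) ≤ 4 * (t + 3) * K * minTransvBound t K i := by
  have hchoose :
      (t + 2 + i).choose t * (t + 2 + (i + 1)) = (t + 2 + (i + 1)).choose t * (i + 3) := by
    have h := Nat.choose_mul_succ_eq (t + 2 + i) t
    rwa [show t + 2 + i + 1 - t = i + 3 by omega] at h
  have hpoly : 9 * (i + 4) * (t + 2 + (i + 1)) ≤ 4 * (t + 3) * ((i + 3) * (i + 3)) := by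
    nlinarith [Nat.zero_le (i ^ 2 * t), Nat.zero_le (i * t), Nat.zero_le (i ^ 2)]
  calc 9 * minTransvBound t K (i + 1)
      = 9 * (i + 4) * ((t + 2 + (i + 1)).choose t * K ^ (i + 2)) := by
        rw [minTransvBound]
        ring
    _ ≤ 4 * (t + 3) * (i + 3) * ((t + 2 + i).choose t * K ^ (i + 2)) := by
        refine Nat.le_of_mul_le_mul_right ?_ (show 0 < i + 3 by omega)
        calc _ = 9 * (i + 4) * ((t + 2 + (i + 1)).choose t * (i + 3)) * K ^ (i + 2) := by ring
          _ = 9 * (i + 4) * (t + 2 + (i + 1)) * ((t + 2 + i).choose t * K ^ (i + 2)) := by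
            rw [← hchoose]
            ring
          _ ≤ 4 * (t + 3) * ((i + 3) * (i + 3)) * ((t + 2 + i).choose t * K ^ (i + 2)) := by
            gcongr
          _ = _ := by ring
    _ = 4 * (t + 3) * K * minTransvBound t K i := by
        rw [minTransvBound]
        ring

theorem mul_sum_add_le_of_forall_mul_le {a : ℕ → ℕ} {c p : ℕ}
    (h : ∀ i < p, (c + 1) * a (i + 1) ≤ a i) :
    c * ∑ i ∈ range p, a (i + 1) + a p ≤ a 0 := by
  induction p with
  | zero => simp
  | succ p ih =>
    rw [sum_range_succ]
    linarith [ih fun i hi ↦ h i (by omega), h p p.lt_succ_self]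

theorem twenty_mul_le_of_add_one_eq {E : ℕ} (hK : 3 ≤ K) (hE : E + 1 = (t + 2) ^ 2 * K) :
    20 * (t + 3) * (t + 6) * (t ^ 2 + 3 * t) * K ≤ 27 * (t ^ 2 + 5 * t + 8) * E := by
  have hpoly : 20 * (t + 3) * (t + 6) * (t ^ 2 + 3 * t)
      ≤ 9 * (t ^ 2 + 5 * t + 8) * (3 * t ^ 2 + 12 * t + 11) := by
    have hsq : 8 * t ^ 2 ≤ t ^ 4 + 16 := by
      zify
      nlinarith [sq_nonneg ((t : ℤ) ^ 2 - 4)]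
    nlinarith [Nat.zero_le (t ^ 3)]
  calc _ ≤ 9 * (t ^ 2 + 5 * t + 8) * (3 * t ^ 2 + 12 * t + 11) * K := by gcongr
    _ = 9 * (t ^ 2 + 5 * t + 8) * ((3 * t ^ 2 + 12 * t + 11) * K) := by ring
    _ ≤ 9 * (t ^ 2 + 5 * t + 8) * (3 * E) := Nat.mul_le_mul_left _ (by nlinarith)
    _ = _ := by ring

theorem coverWeight_add_two_add {i : ℕ} (hi : i ≤ p) :
    coverWeight n (t + 2 + p) t (t + 2 + i)
      = chooseSum (t + 2 + i) (i + 3) * chooseSum n (p + 1 - i) := by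
  rw [coverWeight, show t + 2 + i - t + 1 = i + 3 by omega,
    show t + 2 + p - (t + 2 + i) + 1 = p + 1 - i by omega]

theorem five_mul_minTransvBound_mul_coverWeight_le {E i : ℕ} (hp : p ≤ n) (hi : i < p)
    (hE : E + 1 = (t + 2) ^ 2 * (p + 3))
    (hratio : (t ^ 2 + 5 * t + 8) * E * n.choose p ≤ (t ^ 2 + 3 * t) * n.choose (p + 1)) :
    5 * (minTransvBound t (p + 3) (i + 1) * coverWeight n (t + 2 + p) t (t + 2 + (i + 1)))
      ≤ minTransvBound t (p + 3) i * coverWeight n (t + 2 + p) t (t + 2 + i) := by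
  rw [coverWeight_add_two_add hi, coverWeight_add_two_add hi.le]
  have hbound := nine_mul_minTransvBound_succ_le t (p + 3) i
  have htail : 3 * chooseSum (t + 2 + (i + 1)) (i + 1 + 3)
      ≤ (t + 6) * chooseSum (t + 2 + i) (i + 3) := by
    have h := three_mul_chooseSum_succ_le t (s := i + 2) (by omega)
    rw [show t + (i + 2) = t + 2 + i by ring] at h
    exact h
  have hsum := mul_chooseSum_le_mul_chooseSum_succ hp hratio (j := p + 1 - (i + 1)) (by omega)
  rw [show p + 1 - (i + 1) + 1 = p + 1 - i by omega] at hsum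
  have hE₀ : 0 < E := by nlinarith
  refine Nat.le_of_mul_le_mul_left ?_ (show 0 < 27 * (t ^ 2 + 5 * t + 8) * E by positivity)
  calc _ = 5 * (9 * minTransvBound t (p + 3) (i + 1)
          * (3 * chooseSum (t + 2 + (i + 1)) (i + 1 + 3)
            * ((t ^ 2 + 5 * t + 8) * E * chooseSum n (p + 1 - (i + 1))))) := by ring
    _ ≤ 5 * (4 * (t + 3) * (p + 3) * minTransvBound t (p + 3) i
          * ((t + 6) * chooseSum (t + 2 + i) (i + 3)
            * ((t ^ 2 + 3 * t) * chooseSum n (p + 1 - i)))) := by gcongr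
    _ = 20 * (t + 3) * (t + 6) * (t ^ 2 + 3 * t) * (p + 3) * (minTransvBound t (p + 3) i
          * (chooseSum (t + 2 + i) (i + 3) * chooseSum n (p + 1 - i))) := by ring
    _ ≤ _ := Nat.mul_le_mul_right _ (twenty_mul_le_of_add_one_eq (by omega) hE)

theorem four_mul_add_three_mul_choose_le (ht : 2 ≤ t) (hK : 3 ≤ K) :
    4 * ((4 * t + 3) * K + t.choose 2) + 3 * (t + 2).choose 2 * K ≤ 4 * ((t + 2) ^ 2 * K) := by
  obtain ⟨u, rfl⟩ := Nat.exists_eq_add_of_le' ht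
  obtain ⟨L, rfl⟩ := Nat.exists_eq_add_of_le' hK
  have hu := two_mul_choose_add_two_two u
  have hut : 2 * (3 * (u + 2 + 2).choose 2 * (L + 3))
      = 3 * ((u + 2 + 2) * (u + 2 + 1)) * (L + 3) := by
    rw [← two_mul_choose_add_two_two]
    ring
  nlinarith [Nat.zero_le (L * u), Nat.zero_le (L * u ^ 2), Nat.zero_le (u ^ 2)]

theorem mul_choose_le_of_mul_coverWeight_le_excess {E : ℕ} (ht : 1 ≤ t)
    (hE : E + 1 = (t + 2) ^ 2 * K)
    (h : (t + 2) ^ 2 * K * coverWeight n (t + 2 + p) t (t + 2) ≤ excess n (t + 2 + p) t) :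
    (t ^ 2 + 5 * t + 8) * E * n.choose p ≤ (t ^ 2 + 3 * t) * n.choose (p + 1) := by
  have hweight : coverWeight n (t + 2 + p) t (t + 2) = chooseSum (t + 2) 3 * chooseSum n (p + 1) :=
    coverWeight_add_two_add (Nat.zero_le p)
  rw [hweight, ← hE] at h
  refine (Nat.mul_le_mul_left _ (choose_le_chooseSum_succ n p)).trans ?_
  refine Nat.le_of_add_le_add_right (b := (t ^ 2 + 5 * t + 8) * chooseSum n (p + 1)) ?_
  calc _ = 2 * ((E + 1) * (chooseSum (t + 2) 3 * chooseSum n (p + 1))) := by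
        rw [← two_mul_chooseSum_add_two_three]
        ring
    _ ≤ 2 * excess n (t + 2 + p) t := Nat.mul_le_mul_left 2 h
    _ ≤ _ := two_mul_excess_le ht

theorem sum_mul_coverWeight_le_of_two_le {E : ℕ} {N : ℕ → ℕ} (ht : 2 ≤ t) (hp : p ≤ n)
    (hE : E + 1 = (t + 2) ^ 2 * (p + 3))
    (hratio : (t ^ 2 + 5 * t + 8) * E * n.choose p ≤ (t ^ 2 + 3 * t) * n.choose (p + 1))
    (hN₀ : N 0 ≤ (4 * t + 3) * (p + 3) + t.choose 2)
    (hN : ∀ i ≤ p, N i ≤ minTransvBound t (p + 3) i) :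
    ∑ i ∈ range (p + 1), N i * coverWeight n (t + 2 + p) t (t + 2 + i)
      ≤ (t + 2) ^ 2 * (p + 3) * coverWeight n (t + 2 + p) t (t + 2) := by
  set w : ℕ → ℕ := fun i ↦ coverWeight n (t + 2 + p) t (t + 2 + i)
  have hgeom : 4 * ∑ i ∈ range p, minTransvBound t (p + 3) (i + 1) * w (i + 1)
      ≤ minTransvBound t (p + 3) 0 * w 0 :=
    (Nat.le_add_right _ _).trans <|
      mul_sum_add_le_of_forall_mul_le (a := fun i ↦ minTransvBound t (p + 3) i * w i) (c := 4)
        fun i hi ↦ five_mul_minTransvBound_mul_coverWeight_le hp hi hE hratio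
  have hbound₀ : minTransvBound t (p + 3) 0 = 3 * (t + 2).choose 2 * (p + 3) := by
    have hsymm : (t + 2).choose t = (t + 2).choose 2 := Nat.choose_symm_add
    rw [minTransvBound, add_zero, hsymm]
    ring
  have htail : ∑ i ∈ range p, N (i + 1) * w (i + 1)
      ≤ ∑ i ∈ range p, minTransvBound t (p + 3) (i + 1) * w (i + 1) :=
    sum_le_sum fun i hi ↦ Nat.mul_le_mul_right _ (hN _ (mem_range.mp hi))
  refine Nat.le_of_mul_le_mul_left ?_ (show 0 < 4 by omega)
  calc 4 * ∑ i ∈ range (p + 1), N i * w i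
      = 4 * ∑ i ∈ range p, N (i + 1) * w (i + 1) + 4 * N 0 * w 0 := by
        rw [sum_range_succ']
        ring
    _ ≤ 3 * (t + 2).choose 2 * (p + 3) * w 0
          + 4 * ((4 * t + 3) * (p + 3) + t.choose 2) * w 0 := by
        rw [hbound₀] at hgeom
        exact Nat.add_le_add ((Nat.mul_le_mul_left 4 htail).trans hgeom) (by gcongr)
    _ = (4 * ((4 * t + 3) * (p + 3) + t.choose 2) + 3 * (t + 2).choose 2 * (p + 3)) * w 0 := by
        ring
    _ ≤ 4 * ((t + 2) ^ 2 * (p + 3)) * w 0 :=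
        Nat.mul_le_mul_right _ (four_mul_add_three_mul_choose_le ht (by omega))
    _ = 4 * ((t + 2) ^ 2 * (p + 3) * w 0) := by ring

theorem sum_mul_coverWeight_le_excess {N : ℕ → ℕ} (ht : 1 ≤ t) (hp : p ≤ n)
    (hN₀ : N 0 ≤ (4 * t + 3) * (p + 3) + t.choose 2)
    (hN : ∀ i ≤ p, N i ≤ minTransvBound t (p + 3) i)
    (h : ∑ i ∈ range (p + 1), (t + 2 + i) ^ 2 * (p + 3) ^ (i + 1)
      * coverWeight n (t + 2 + p) t (t + 2 + i) ≤ excess n (t + 2 + p) t) :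
    ∑ i ∈ range (p + 1), N i * coverWeight n (t + 2 + p) t (t + 2 + i)
      ≤ excess n (t + 2 + p) t := by
  obtain rfl | ht₂ := ht.eq_or_lt
  · refine (sum_le_sum fun i hi ↦ Nat.mul_le_mul_right _ ?_).trans h
    refine (hN i (Nat.lt_succ_iff.mp (mem_range.mp hi))).trans_eq ?_
    rw [minTransvBound, Nat.choose_one_right]
    ring
  · have hfirst : (t + 2) ^ 2 * (p + 3) * coverWeight n (t + 2 + p) t (t + 2)
        ≤ excess n (t + 2 + p) t := by
      rw [sum_range_succ'] at h
      simpa using (Nat.le_add_left _ _).trans h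
    obtain ⟨E, hE⟩ := Nat.exists_eq_add_one_of_ne_zero
      (show (t + 2) ^ 2 * (p + 3) ≠ 0 by positivity)
    have hratio := mul_choose_le_of_mul_coverWeight_le_excess ht hE.symm hfirst
    exact (sum_mul_coverWeight_le_of_two_le ht₂ hp hE.symm hratio hN₀ hN).trans hfirst

end Inequality

section Bound

variable {n k t : ℕ} {F : Finset (Finset ℕ)}

theorem sum_Icc_add_eq_sum_range {M : Type*} [AddCommMonoid M] (f : ℕ → M) (m p : ℕ) :
    ∑ l ∈ Icc m (m + p), f l = ∑ i ∈ range (p + 1), f (m + i) := by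
  rw [← Ico_add_one_right_eq_Icc, sum_Ico_eq_sum_range,
    show m + p + 1 - m = p + 1 by omega]

theorem sum_Icc_mul_coverWeight_le_excess {N : ℕ → ℕ} (ht : 1 ≤ t) (hk : t + 2 ≤ k)
    (hkn : k ≤ n) (hN₀ : N (t + 2) ≤ (4 * t + 3) * (k - t + 1) + t.choose 2)
    (hN : ∀ l ∈ Icc (t + 2) k,
      N l ≤ l.choose t * ((l - t + 1) * (k - t + 1) ^ (l - t - 1)))
    (h : ∑ l ∈ Icc (t + 2) k, l ^ 2 * (k - t + 1) ^ (l - t - 1) * coverWeight n k t l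
      ≤ excess n k t) :
    ∑ l ∈ Icc (t + 2) k, N l * coverWeight n k t l ≤ excess n k t := by
  obtain ⟨p, rfl⟩ := Nat.exists_eq_add_of_le hk
  have hK : t + 2 + p - t + 1 = p + 3 := by omega
  have hl (i : ℕ) : t + 2 + i - t + 1 = i + 3 ∧ t + 2 + i - t - 1 = i + 1 := by omega
  rw [sum_Icc_add_eq_sum_range] at h ⊢
  simp only [hK, hl] at h hN₀
  refine sum_mul_coverWeight_le_excess (N := fun i ↦ N (t + 2 + i)) ht (by omega) hN₀
    (fun i hi ↦ ?_) h
  simpa only [minTransvBound, hK, hl] using hN (t + 2 + i) (mem_Icc.mpr (by omega))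

theorem exists_triviallyIntersecting_minTransvLE
    (h : TriviallyIntersecting t (minTransvLE n k t F (t + 1))) (htk : t + 1 ≤ k) :
    ∃ a, t + 1 ≤ a ∧ TriviallyIntersecting t (minTransvLE n k t F a) ∧
      ∀ l ∈ Ioc a k, ¬ TriviallyIntersecting t (minTransvLE n k t F l) := by
  classical
  refine ⟨Nat.findGreatest (fun l ↦ TriviallyIntersecting t (minTransvLE n k t F l)) k,
    Nat.le_findGreatest htk h, ?_, fun l hl ↦ ?_⟩
  · exact Nat.findGreatest_spec (P := fun l ↦ TriviallyIntersecting t (minTransvLE n k t F l)) htk h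
  · exact Nat.findGreatest_is_greatest (mem_Ioc.mp hl).1 (mem_Ioc.mp hl).2

theorem card_interFam_le_of_triviallyIntersecting (ht : 1 ≤ t) (hk : t + 2 ≤ k) (hkn : k ≤ n)
    (hineq : ∑ l ∈ Icc (t + 2) k, l ^ 2 * (k - t + 1) ^ (l - t - 1) * coverWeight n k t l
      ≤ excess n k t)
    (hF : F ⊆ (Icc 1 n).powersetCard k) (hFt : tIntersecting t F)
    (hT : tIntersecting t (transv n k t F))
    (h : TriviallyIntersecting t (minTransvLE n k t F (t + 1))) :
    #(interFam F) ≤ excess n k t + chooseSum (n - t) (k - t) := by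
  obtain ⟨a, hta, ha, hnontriv⟩ := exists_triviallyIntersecting_minTransvLE h (by omega)
  let N : ℕ → ℕ := fun l ↦ if a < l then #(minTransv n k t F l) else 0
  have hsum : ∑ l ∈ Ioc a k, #(minTransv n k t F l) * coverWeight n k t l
      ≤ ∑ l ∈ Icc (t + 2) k, N l * coverWeight n k t l := by
    refine (sum_congr rfl fun l hl ↦ ?_).trans_le
      (sum_le_sum_of_subset fun l hl ↦ mem_Icc.mpr (by have := mem_Ioc.mp hl; omega))
    simp only [N, (mem_Ioc.mp hl).1, if_true]
  have hN₀ : N (t + 2) ≤ (4 * t + 3) * (k - t + 1) + t.choose 2 := by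
    dsimp only [N]
    split_ifs with hal
    · exact card_minTransv_add_two_le hF hT (hnontriv _ (mem_Ioc.mpr ⟨hal, hk⟩))
    · exact Nat.zero_le _
  have hN : ∀ l ∈ Icc (t + 2) k,
      N l ≤ l.choose t * ((l - t + 1) * (k - t + 1) ^ (l - t - 1)) := fun l hl ↦ by
    dsimp only [N]
    split_ifs with hal
    · exact card_minTransv_le hF hT (hnontriv _ (mem_Ioc.mpr ⟨hal, (mem_Icc.mp hl).2⟩))
    · exact Nat.zero_le _
  have hle := sum_Icc_mul_coverWeight_le_excess ht hk hkn hN₀ hN hineq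
  have hcover := card_interFam_le_add_sum hF hFt (by omega) ha
  omega

theorem sum_mul_sum_choose_eq_sum_mul_coverWeight (f : ℕ → ℕ) (n k t : ℕ) :
    ∑ l ∈ Icc (t + 2) k,
        f l * (∑ i ∈ Icc t l, l.choose i) * (∑ j ∈ range (k - l + 1), n.choose j)
      = ∑ l ∈ Icc (t + 2) k, f l * coverWeight n k t l :=
  sum_congr rfl fun l hl ↦ by
    have htl : t ≤ l := by have := (mem_Icc.mp hl).1; omega
    rw [sum_Icc_choose_eq_chooseSum htl, coverWeight, mul_assoc, chooseSum, chooseSum]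

end Bound

theorem stmt15 (n k t : ℕ) (ht : 1 ≤ t) (hk : t + 2 ≤ k) (hn : 2 * k ≤ n)
    (hineq : ∑ ℓ ∈ Finset.Icc (t + 2) k,
          ℓ ^ 2 * (k - t + 1) ^ (ℓ - t - 1)
            * (∑ i ∈ Finset.Icc t ℓ, ℓ.choose i)
            * (∑ j ∈ Finset.range (k - ℓ + 1), n.choose j)
        ≤ (n - t - 1).choose (k - t - 1)
          + ((t + 2) * (t + 1) - 4) / 2 * (n - t - 2).choose (k - t - 1)
          + ((t + 3) * (t + 2) - 8) / 2 * ∑ j ∈ Finset.range (k - t - 1), (n - t - 2).choose j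
          + ∑ j ∈ Finset.range (k - t - 2), (n - t - 2).choose j) :
    ∀ F ⊆ (Finset.Icc 1 n).powersetCard k, tIntersecting t F →
      (interFam F).card ≤ (interFam (At n k t)).card := by
  intro F hF hFt
  have hcover := (sum_mul_sum_choose_eq_sum_mul_coverWeight _ n k t).symm.trans_le hineq
  have hAt : #(interFam (At n k t)) = excess n k t + chooseSum (n - t) (k - t) := by
    rw [interFam_At hk hn, excess_add_chooseSum ht hk (by omega)]
    exact card_heavySets (Icc_subset_Icc_right (by omega)) (by simp)
  obtain ⟨G, hFG, hG, hGt, hGs⟩ := exists_saturated hF hFt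
  have hT := hGs.tIntersecting_transv hGt (by omega) hn
  refine (card_le_card (interFam_mono hFG)).trans ?_
  by_cases htriv : TriviallyIntersecting t (minTransvLE n k t G (t + 1))
  · rw [hAt]
    exact card_interFam_le_of_triviallyIntersecting ht hk (by omega) hcover hG hGt hT htriv
  · obtain ⟨Y, hYn, hY, hGY⟩ := exists_forall_succ_le_card_inter hT htriv
    rw [hAt, excess_add_chooseSum ht hk (by omega), ← card_heavySets hYn hY]
    exact card_le_card (interFam_subset_heavySets hG hY hGY)
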